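/- Define the polynomials t_n(y) = Σ_{i≥1} c(n,i) y^i in ℤ[y]. Then t_1(y) = 2y + 6y², t_2(y) = 2y + 44y² + 12y³ + 6y⁴, and for all n ≥ 3, t_n(y) = (4 + 3y + y²)·t_{n-1}(y) - (3 - 7y + 3y² + y³)·t_{n-2}(y). -/

import Mathlib

open SimpleGraph Polynomial

/-- A 2-colored partition of a simple graph `G`: a partition of the vertex set into
nonempty parts, each inducing a connected subgraph, together with an assignment of one
of two colors to each part such that distinct parts joined by an edge get different colors. -/
structure TwoColoredPartition {V : Type*} (G : SimpleGraph V) where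
  parts : Set (Set V)
  nonempty : ∀ p ∈ parts, p.Nonempty
  covers : ∀ v : V, ∃ p, p ∈ parts ∧ v ∈ p
  disj : ∀ p ∈ parts, ∀ q ∈ parts, p ≠ q → Disjoint p q
  conn : ∀ p ∈ parts, (G.induce p).Connected
  color : parts → Fin 2
  proper : ∀ p q : parts, p ≠ q →
    (∃ v ∈ (p : Set V), ∃ w ∈ (q : Set V), G.Adj v w) → color p ≠ color q

/-- The size of a 2-colored partition: its number of parts. -/
noncomputable def TwoColoredPartition.size {V : Type*} {G : SimpleGraph V}
    (T : TwoColoredPartition G) : ℕ :=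
  T.parts.ncard

/-- `c n i` is the number of 2-colored partitions of `K₃ × Pₙ` of size `i`. -/
noncomputable def c (n i : ℕ) : ℕ :=
  Nat.card {T : TwoColoredPartition ((⊤ : SimpleGraph (Fin 3)) □ pathGraph n) // T.size = i}

/-- `tpoly n = ∑_{i ≥ 1} c(n,i) yⁱ ∈ ℤ[y]`. -/
noncomputable def tpoly (n : ℕ) : Polynomial ℤ :=
  ∑ᶠ (i : ℕ) (_ : 1 ≤ i), Polynomial.monomial i (c n i : ℤ)

/-!
The parts of a two-colored partition are the connected components of the monochromatic subgraph of
the induced vertex coloring, and every vertex coloring arises in this way. Hence `tpoly n` is the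
sum of `y ^ (number of monochromatic components)` over all colorings of `K₃ × Pₙ` with two colors.

Each column is a clique, so a monochromatic component contains a full color class of every column it
meets and is determined by its color and its leftmost column. The number of components starting in a
column depends only on that column and its predecessor, so `tpoly n` is a transfer matrix sum.
The `8 × 8` transfer matrix respects the division of the columns into monochromatic and mixed ones,
leaving a `2 × 2` quotient. Its trace `4 + 3y + y²` and determinant `3 - 7y + 3y² + y³` are the
coefficients of the recurrence, by the Cayley–Hamilton theorem.
-/

section Monochromatic

variable {V κ : Type*} {G : SimpleGraph V} {f : V → κ} {v w : V}

/-- The monochromatic subgraph of `G` under the vertex coloring `f`: the edges of `G` whose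
endpoints have the same color. The coloring need not be proper. -/
def monochromaticSubgraph (G : SimpleGraph V) (f : V → κ) : SimpleGraph V where
  Adj v w := G.Adj v w ∧ f v = f w
  symm := ⟨fun _ _ h ↦ ⟨h.1.symm, h.2.symm⟩⟩
  loopless := ⟨fun _ h ↦ h.1.ne rfl⟩

lemma monochromaticSubgraph_le (G : SimpleGraph V) (f : V → κ) : monochromaticSubgraph G f ≤ G :=
  fun _ _ h ↦ h.1

lemma color_eq_of_reachable (h : (monochromaticSubgraph G f).Reachable v w) : f v = f w := by
  obtain ⟨W⟩ := h
  induction W with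
  | nil => rfl
  | cons hadj _ ih => exact hadj.2.trans ih

lemma color_eq_of_mem_supp {C : (monochromaticSubgraph G f).ConnectedComponent}
    (hv : v ∈ C.supp) (hw : w ∈ C.supp) : f v = f w :=
  color_eq_of_reachable (C.reachable_of_mem_supp hv hw)

end Monochromatic

namespace TwoColoredPartition

variable {V : Type*} {G : SimpleGraph V}

lemma eq_of_mem_of_mem (T : TwoColoredPartition G) {p q : Set V} (hp : p ∈ T.parts)
    (hq : q ∈ T.parts) {v : V} (hvp : v ∈ p) (hvq : v ∈ q) : p = q := by
  by_contra h
  exact Set.disjoint_left.1 (T.disj p hp q hq h) hvp hvq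

/-- The vertex coloring giving each vertex the color of its part. -/
noncomputable def vertexColor (T : TwoColoredPartition G) (v : V) : Fin 2 :=
  T.color ⟨(T.covers v).choose, (T.covers v).choose_spec.1⟩

lemma vertexColor_eq_color (T : TwoColoredPartition G) {p : Set V} (hp : p ∈ T.parts) {v : V}
    (hv : v ∈ p) : T.vertexColor v = T.color ⟨p, hp⟩ := by
  obtain ⟨hq, hvq⟩ := (T.covers v).choose_spec
  exact congrArg T.color (Subtype.ext (T.eq_of_mem_of_mem hq hp hvq hv))

lemma mem_of_adj_of_vertexColor_eq (T : TwoColoredPartition G) {p : Set V} (hp : p ∈ T.parts)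
    {v w : V} (hv : v ∈ p) (hadj : G.Adj v w) (hcolor : T.vertexColor v = T.vertexColor w) :
    w ∈ p := by
  obtain ⟨q, hq, hw⟩ := T.covers w
  by_cases hpq : p = q
  · exact hpq ▸ hw
  · rw [T.vertexColor_eq_color hp hv, T.vertexColor_eq_color hq hw] at hcolor
    exact absurd hcolor (T.proper ⟨p, hp⟩ ⟨q, hq⟩ (by simpa using hpq) ⟨v, hv, w, hw, hadj⟩)

lemma mem_iff_reachable (T : TwoColoredPartition G) {p : Set V} (hp : p ∈ T.parts) {v w : V}
    (hv : v ∈ p) : w ∈ p ↔ (monochromaticSubgraph G T.vertexColor).Reachable v w := by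
  constructor
  · intro hw
    let φ : G.induce p →g monochromaticSubgraph G T.vertexColor :=
      { toFun := Subtype.val
        map_rel' := fun {a b} hab ↦
          ⟨hab, by rw [T.vertexColor_eq_color hp a.2, T.vertexColor_eq_color hp b.2]⟩ }
    exact ((T.conn p hp).preconnected ⟨v, hv⟩ ⟨w, hw⟩).map φ
  · rintro ⟨W⟩
    induction W with
    | nil => exact hv
    | cons hadj _ ih => exact ih (T.mem_of_adj_of_vertexColor_eq hp hv hadj.1 hadj.2)

lemma parts_eq_range_supp (T : TwoColoredPartition G) :
    T.parts = Set.range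
      (ConnectedComponent.supp (G := monochromaticSubgraph G T.vertexColor)) := by
  have eq_supp {p : Set V} (hp : p ∈ T.parts) {v : V} (hv : v ∈ p) :
      ((monochromaticSubgraph G T.vertexColor).connectedComponentMk v).supp = p := by
    ext w
    rw [ConnectedComponent.mem_supp_iff, ConnectedComponent.eq, reachable_comm,
      T.mem_iff_reachable hp hv]
  ext p
  constructor
  · intro hp
    obtain ⟨v, hv⟩ := T.nonempty p hp
    exact ⟨_, eq_supp hp hv⟩
  · rintro ⟨C, rfl⟩
    induction C using ConnectedComponent.ind with
    | _ v =>
      obtain ⟨q, hq, hv⟩ := T.covers v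
      rwa [eq_supp hq hv]

lemma size_eq_card_connectedComponent (T : TwoColoredPartition G) :
    T.size = Nat.card (monochromaticSubgraph G T.vertexColor).ConnectedComponent := by
  rw [size, parts_eq_range_supp, Set.ncard_range_of_injective ConnectedComponent.supp_injective]

lemma vertexColor_injective : Function.Injective (vertexColor (G := G)) := by
  intro T T' h
  have hparts : T.parts = T'.parts := by rw [T.parts_eq_range_supp, T'.parts_eq_range_supp, h]
  have hcolor (p : Set V) (hp : p ∈ T.parts) (hp' : p ∈ T'.parts) :
      T.color ⟨p, hp⟩ = T'.color ⟨p, hp'⟩ := by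
    obtain ⟨v, hv⟩ := T.nonempty p hp
    rw [← T.vertexColor_eq_color hp hv, ← T'.vertexColor_eq_color hp' hv, h]
  cases T
  cases T'
  cases hparts
  congr
  exact funext fun p ↦ hcolor p.1 p.2 p.2

/-- The partition into the connected components of the monochromatic subgraph of `f`, each colored
by the common value of `f` on it. -/
noncomputable def ofColoring (G : SimpleGraph V) (f : V → Fin 2) : TwoColoredPartition G where
  parts := Set.range (ConnectedComponent.supp (G := monochromaticSubgraph G f))
  nonempty := by
    rintro _ ⟨C, rfl⟩
    exact C.nonempty_supp
  covers v := ⟨_, ⟨_, rfl⟩, ConnectedComponent.connectedComponentMk_mem⟩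
  disj := by
    rintro _ ⟨C, rfl⟩ _ ⟨D, rfl⟩ hne
    exact Set.disjoint_left.2 fun _ hC hD ↦
      hne (congrArg _ (ConnectedComponent.eq_of_common_vertex hC hD))
  conn := by
    rintro _ ⟨C, rfl⟩
    exact C.connected_toSimpleGraph.mono (comap_monotone _ (monochromaticSubgraph_le G f))
  color p := f p.2.choose.nonempty_supp.some
  proper := by
    rintro ⟨p, hp⟩ ⟨q, hq⟩ hne ⟨v, hv, w, hw, hadj⟩ hcolor
    obtain ⟨hv', hw'⟩ : v ∈ hp.choose.supp ∧ w ∈ hq.choose.supp := by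
      rw [hp.choose_spec, hq.choose_spec]
      exact ⟨hv, hw⟩
    have hfvw : f v = f w := by
      rw [color_eq_of_mem_supp hv' hp.choose.nonempty_supp.some_mem,
        color_eq_of_mem_supp hw' hq.choose.nonempty_supp.some_mem]
      exact hcolor
    have hC : hp.choose = hq.choose := by
      rw [← hv', ← hw']
      exact ConnectedComponent.connectedComponentMk_eq_of_adj ⟨hadj, hfvw⟩
    exact hne (Subtype.ext
      (hp.choose_spec.symm.trans ((congrArg _ hC).trans hq.choose_spec)))

lemma vertexColor_ofColoring (f : V → Fin 2) : (ofColoring G f).vertexColor = f := by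
  funext v
  let p : (ofColoring G f).parts :=
    ⟨((monochromaticSubgraph G f).connectedComponentMk v).supp, _, rfl⟩
  have hv : v ∈ p.2.choose.supp := by
    rw [p.2.choose_spec]
    exact ConnectedComponent.connectedComponentMk_mem
  rw [vertexColor_eq_color _ p.2 ConnectedComponent.connectedComponentMk_mem]
  exact color_eq_of_mem_supp p.2.choose.nonempty_supp.some_mem hv

/-- A two-colored partition of `G` is determined by its vertex coloring, which is arbitrary. -/
noncomputable def equivColoring (G : SimpleGraph V) : TwoColoredPartition G ≃ (V → Fin 2) :=
  Equiv.ofBijective vertexColor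
    ⟨vertexColor_injective, fun f ↦ ⟨ofColoring G f, vertexColor_ofColoring f⟩⟩

end TwoColoredPartition

lemma finsum_monomial_card_fiber {τ R : Type*} [Fintype τ] [Semiring R] (s : τ → ℕ)
    (hs : ∀ t, 1 ≤ s t) :
    ∑ᶠ (i : ℕ) (_ : 1 ≤ i), monomial i (Nat.card {t // s t = i} : R) = ∑ t, X ^ s t := by
  classical
  have support_subset : (Function.support fun i ↦
      ∑ᶠ _ : 1 ≤ i, monomial i (Nat.card {t // s t = i} : R)) ⊆ Finset.univ.image s := by
    intro i hi
    by_contra hni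
    have : IsEmpty {t // s t = i} := ⟨fun t ↦ hni (by simp [← t.2])⟩
    exact hi (by simp)
  rw [finsum_eq_sum_of_support_subset _ support_subset, Finset.sum_comp (fun i ↦ X ^ i) s]
  refine Finset.sum_congr rfl fun i hi ↦ ?_
  obtain ⟨t, -, rfl⟩ := Finset.mem_image.1 hi
  rw [finsum_eq_if, if_pos (hs t), Nat.card_eq_fintype_card, Fintype.card_subtype]
  simp [← C_mul_X_pow_eq_monomial, nsmul_eq_mul]

lemma finsum_monomial_card_twoColoredPartition {V : Type*} [Fintype V] [DecidableEq V]
    [Nonempty V] (G : SimpleGraph V) :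
    ∑ᶠ (i : ℕ) (_ : 1 ≤ i), monomial i (Nat.card {T : TwoColoredPartition G // T.size = i} : ℤ) =
      ∑ f : V → Fin 2, X ^ Nat.card (monochromaticSubgraph G f).ConnectedComponent := by
  rw [← finsum_monomial_card_fiber _ fun f ↦ Nat.card_pos]
  refine finsum_congr fun i ↦ finsum_congr fun _ ↦ ?_
  rw [Nat.card_congr ((TwoColoredPartition.equivColoring G).subtypeEquiv fun T ↦ ?_)]
  rw [T.size_eq_card_connectedComponent]
  rfl

section ComponentStart

variable {ι α κ : Type*}

/-- For a coloring of `ι × α` with columns `s j : ι → κ`, the color `a` occurs in column `j` but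
shares no row with `a` in a preceding column. When a column is a clique of the graph, these pairs
`(j, a)` are the leftmost columns and colors of the monochromatic components. -/
def IsComponentStart [Preorder α] (s : α → ι → κ) (j : α) (a : κ) : Prop :=
  (∃ i, s j i = a) ∧ ∀ k, k ⋖ j → ∀ i, s k i = a → s j i ≠ a

/-- The monochromatic subgraph of the product of a complete graph with a Hasse diagram, for the
coloring with columns `s j`. -/
abbrev columnGraph [Preorder α] (s : α → ι → κ) : SimpleGraph (ι × α) :=
  monochromaticSubgraph ((⊤ : SimpleGraph ι) □ hasse α) fun v ↦ s v.2 v.1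

lemma columnGraph_reachable_of_eq [Preorder α] {s : α → ι → κ} {j : α} {i i' : ι}
    (h : s j i = s j i') : (columnGraph s).Reachable (i, j) (i', j) := by
  by_cases hi : i = i'
  · rw [hi]
  · exact Adj.reachable ⟨by simp [boxProd_adj, hi], h⟩

lemma exists_isComponentStart_reachable [Preorder α] [WellFoundedLT α]
    (s : α → ι → κ) (v : ι × α) :
    ∃ i j, IsComponentStart s j (s j i) ∧ (columnGraph s).Reachable (i, j) v := by
  obtain ⟨i, j⟩ := v
  induction j using WellFoundedLT.induction generalizing i with
  | ind j ih =>
    by_cases hstart : IsComponentStart s j (s j i)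
    · exact ⟨i, j, hstart, .rfl⟩
    obtain ⟨k, hkj, r, hk, hj⟩ : ∃ k, k ⋖ j ∧ ∃ r, s k r = s j i ∧ s j r = s j i := by
      simpa [IsComponentStart] using hstart
    obtain ⟨i₀, j₀, hstart₀, hreach⟩ := ih k hkj.lt r
    have hstep : (columnGraph s).Adj (r, k) (r, j) :=
      ⟨by simp [boxProd_adj, hkj], hk.trans hj.symm⟩
    exact ⟨i₀, j₀, hstart₀,
      (hreach.trans hstep.reachable).trans (columnGraph_reachable_of_eq hj)⟩

lemma IsComponentStart.le_of_reachable [LinearOrder α] {s : α → ι → κ} {j : α} {v w : ι × α}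
    (hs : IsComponentStart s j (s v.2 v.1)) (hvw : (columnGraph s).Reachable v w) (hv : j ≤ v.2) :
    j ≤ w.2 := by
  obtain ⟨W⟩ := hvw
  induction W with
  | nil => exact hv
  | @cons v u _ hadj _ ih =>
    obtain ⟨hvu, hcolor : s v.2 v.1 = s u.2 u.1⟩ := hadj
    refine ih (hcolor ▸ hs) ?_
    rcases boxProd_adj.1 hvu with ⟨-, h⟩ | ⟨hcov, hrow⟩
    · exact h ▸ hv
    rcases hasse_adj.1 hcov with hcov | hcov
    · exact hv.trans hcov.le
    · by_contra! hlt
      have hj : v.2 = j := (hcov.ge_of_gt hlt).antisymm hv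
      exact hs.2 u.2 (hj ▸ hcov) u.1 hcolor.symm (by rw [← hrow, ← hj])

theorem card_connectedComponent_columnGraph [LinearOrder α] [WellFoundedLT α] (s : α → ι → κ) :
    Nat.card (columnGraph s).ConnectedComponent =
      Nat.card {p : α × κ // IsComponentStart s p.1 p.2} := by
  choose row hrow using fun p : {p : α × κ // IsComponentStart s p.1 p.2} ↦ p.2.1
  let component (p : {p : α × κ // IsComponentStart s p.1 p.2}) :
      (columnGraph s).ConnectedComponent := (columnGraph s).connectedComponentMk (row p, p.1.1)
  refine (Nat.card_eq_of_bijective component ⟨fun p q hpq ↦ ?_, fun C ↦ ?_⟩).symm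
  · have hreach := ConnectedComponent.exact hpq
    have hcolor : p.1.2 = q.1.2 := by
      rw [← hrow p, ← hrow q]
      exact color_eq_of_reachable hreach
    have hle : p.1.1 ≤ q.1.1 :=
      IsComponentStart.le_of_reachable (by simpa only [hrow] using p.2) hreach le_rfl
    have hge : q.1.1 ≤ p.1.1 :=
      IsComponentStart.le_of_reachable (by simpa only [hrow] using q.2) hreach.symm le_rfl
    exact Subtype.ext (Prod.ext (hle.antisymm hge) hcolor)
  · induction C using ConnectedComponent.ind with
    | _ v =>
      obtain ⟨i, j, hstart, hreach⟩ := exists_isComponentStart_reachable s v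
      refine ⟨⟨(j, s j i), hstart⟩, ConnectedComponent.sound ?_⟩
      exact (columnGraph_reachable_of_eq (hrow ⟨(j, s j i), hstart⟩)).trans hreach

end ComponentStart

section NewColors

variable {ι κ : Type*} [Fintype ι] [DecidableEq κ]

/-- The colors of the column `u` which no row carries over from the preceding column `t`: the
colors in which a new component starts. -/
def newColors (t u : ι → κ) : Finset κ :=
  Finset.univ.image u \ ({i | t i = u i} : Finset ι).image u

lemma isComponentStart_zero_iff {m : ℕ} (s : Fin (m + 1) → ι → κ) (a : κ) :
    IsComponentStart s 0 a ↔ a ∈ Finset.univ.image (s 0) := by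
  simp [IsComponentStart, Fin.covBy_iff, Nat.covBy_iff_add_one_eq]

lemma isComponentStart_succ_iff {m : ℕ} (s : Fin (m + 1) → ι → κ) (j : Fin m) (a : κ) :
    IsComponentStart s j.succ a ↔ a ∈ newColors (s j.castSucc) (s j.succ) := by
  have covBy_succ_iff (k : Fin (m + 1)) : k ⋖ j.succ ↔ k = j.castSucc := by
    simp [Fin.covBy_iff, Nat.covBy_iff_add_one_eq, Fin.ext_iff]
  simp only [IsComponentStart, covBy_succ_iff, forall_eq, newColors, Finset.mem_sdiff,
    Finset.mem_image, Finset.mem_univ, Finset.mem_filter, true_and, not_exists, not_and]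
  grind

theorem card_connectedComponent_columnGraph_fin {m : ℕ} (s : Fin (m + 1) → ι → κ) :
    Nat.card (columnGraph s).ConnectedComponent =
      (Finset.univ.image (s 0)).card + ∑ j : Fin m, (newColors (s j.castSucc) (s j.succ)).card := by
  have : ∀ j, Finite {a // IsComponentStart s j a} := fun j ↦
    (Set.finite_range (s j)).subset fun _ ha ↦ ha.1
  rw [card_connectedComponent_columnGraph,
    Nat.card_congr (Equiv.subtypeProdEquivSigmaSubtype (IsComponentStart s)), Nat.card_sigma,
    Fin.sum_univ_succ]
  simp only [isComponentStart_zero_iff, isComponentStart_succ_iff, Nat.card_eq_fintype_card,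
    Fintype.card_coe]

end NewColors

section TransferMatrix

open Matrix

variable {σ τ ι κ R : Type*} [Fintype σ] [Fintype τ] [DecidableEq τ]

theorem sum_mul_prod_eq_dotProduct_pow_mulVec_one [DecidableEq σ] [CommSemiring R]
    (M : Matrix σ σ R) (w : σ → R) (m : ℕ) :
    ∑ s : Fin (m + 1) → σ, w (s 0) * ∏ j : Fin m, M (s j.castSucc) (s j.succ) =
      w ⬝ᵥ M ^ m *ᵥ 1 := by
  induction m generalizing w with
  | zero =>
    rw [← (Equiv.funUnique (Fin 1) σ).symm.sum_comp]
    simp [dotProduct]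
  | succ m ih =>
    rw [← (Fin.consEquiv fun _ ↦ σ).sum_comp, Fintype.sum_prod_type, pow_succ',
      ← mulVec_mulVec]
    refine Finset.sum_congr rfl fun t _ ↦ ?_
    -- Once the first state `t` is fixed, row `t` of `M` is the initial weight of the others.
    simp only [Fin.consEquiv_apply, Fin.cons_zero, Fin.prod_univ_succ, Fin.castSucc_zero,
      Fin.cons_succ, ← Fin.succ_castSucc]
    rw [← Finset.mul_sum, ih]
    rfl

lemma dotProduct_comp_eq_dotProduct_sum_fiber [NonUnitalNonAssocSemiring R] (π : σ → τ)
    (w : σ → R) (v : τ → R) : w ⬝ᵥ v ∘ π = (fun k ↦ ∑ u with π u = k, w u) ⬝ᵥ v := by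
  simp only [dotProduct, Finset.sum_mul]
  rw [← Finset.sum_fiberwise Finset.univ π]
  refine Finset.sum_congr rfl fun k _ ↦ Finset.sum_congr rfl fun u hu ↦ ?_
  rw [Function.comp_apply, (Finset.mem_filter.1 hu).2]

lemma pow_mulVec_comp_of_sum_fiber_eq [DecidableEq σ] [Semiring R] {π : σ → τ} {M : Matrix σ σ R}
    {Q : Matrix τ τ R} (h : ∀ t k, ∑ u with π u = k, M t u = Q (π t) k) (m : ℕ) (v : τ → R) :
    M ^ m *ᵥ (v ∘ π) = (Q ^ m *ᵥ v) ∘ π := by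
  induction m with
  | zero => simp
  | succ m ih =>
    rw [pow_succ', pow_succ', ← mulVec_mulVec, ← mulVec_mulVec, ih]
    funext t
    rw [mulVec, dotProduct_comp_eq_dotProduct_sum_fiber]
    simp only [h]
    rfl

lemma dotProduct_pow_add_two_mulVec_fin_two [CommRing R] (Q : Matrix (Fin 2) (Fin 2) R)
    (v w : Fin 2 → R) (m : ℕ) :
    v ⬝ᵥ Q ^ (m + 2) *ᵥ w =
      Q.trace * (v ⬝ᵥ Q ^ (m + 1) *ᵥ w) - Q.det * (v ⬝ᵥ Q ^ m *ᵥ w) := by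
  nontriviality R
  have cayley_hamilton : Q ^ 2 = Q.trace • Q - Q.det • 1 := by
    have h := Q.aeval_self_charpoly
    rw [charpoly_fin_two] at h
    simp only [map_add, map_sub, map_mul, map_pow, aeval_X, aeval_C, Algebra.algebraMap_eq_smul_one,
      smul_mul_assoc, one_mul] at h
    rw [← sub_eq_zero, ← h]
    abel
  rw [pow_add, cayley_hamilton, mul_sub, mul_smul_comm, mul_smul_comm, mul_one, ← pow_succ,
    sub_mulVec, smul_mulVec, smul_mulVec, dotProduct_sub, dotProduct_smul, dotProduct_smul,
    smul_eq_mul, smul_eq_mul]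

/-- The transfer matrix counting components by powers of `x` as columns are appended. -/
def transferMatrix (ι κ : Type*) [Fintype ι] [DecidableEq κ] [Monoid R] (x : R) :
    Matrix (ι → κ) (ι → κ) R :=
  of fun t u ↦ x ^ (newColors t u).card

theorem sum_pow_card_connectedComponent [Fintype ι] [DecidableEq ι] [Fintype κ] [DecidableEq κ]
    [CommSemiring R] (x : R) (m : ℕ) :
    ∑ f : ι × Fin (m + 1) → κ, x ^ Nat.card
        (monochromaticSubgraph ((⊤ : SimpleGraph ι) □ pathGraph (m + 1)) f).ConnectedComponent =
      (fun u : ι → κ ↦ x ^ (Finset.univ.image u).card) ⬝ᵥ transferMatrix ι κ x ^ m *ᵥ 1 := by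
  rw [← sum_mul_prod_eq_dotProduct_pow_mulVec_one,
    ← ((Equiv.curry ι (Fin (m + 1)) κ).trans (Equiv.piComm fun _ _ ↦ κ)).symm.sum_comp]
  refine Finset.sum_congr rfl fun s _ ↦ ?_
  simp only [transferMatrix, of_apply]
  rw [Finset.prod_pow_eq_pow_sum, ← pow_add, ← card_connectedComponent_columnGraph_fin]
  rfl

end TransferMatrix

section ThreeRows

open Matrix

/-- The type of a two-colored column of height three: `0` if monochromatic and `1` if both colors
occur. -/
def columnType (u : Fin 3 → Fin 2) : Fin 2 :=
  if (Finset.univ.image u).card = 1 then 0 else 1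

-- In the last entry take `t = (0, 0, 1)`: its complement `(1, 1, 0)` starts two components, the
-- columns `(0, 1, 0)` and `(1, 0, 0)` start one each, and the other three mixed columns none.
lemma map_card_newColors_columnType : ∀ (t : Fin 3 → Fin 2) (k : Fin 2),
    (Finset.univ.filter (columnType · = k)).val.map (fun u ↦ (newColors t u).card) =
      (!![{0, 1}, {1, 1, 1, 1, 1, 1}; {0, 0}, {0, 0, 0, 1, 1, 2}] :
        Matrix (Fin 2) (Fin 2) (Multiset ℕ)) (columnType t) k := by
  decide

lemma map_card_image_columnType : ∀ k : Fin 2,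
    (Finset.univ.filter (columnType · = k)).val.map (fun u ↦ (Finset.univ.image u).card) =
      (![{1, 1}, {2, 2, 2, 2, 2, 2}] : Fin 2 → Multiset ℕ) k := by
  decide

/-- The quotient of the transfer matrix of three rows and two colors by the column type. -/
def quotientMatrix {R : Type*} [Semiring R] (x : R) : Matrix (Fin 2) (Fin 2) R :=
  !![1 + x, 6 * x; 2, 3 + 2 * x + x ^ 2]

lemma trace_quotientMatrix {R : Type*} [CommSemiring R] (x : R) :
    (quotientMatrix x).trace = 4 + 3 * x + x ^ 2 := by
  rw [quotientMatrix, trace_fin_two_of]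
  ring

lemma det_quotientMatrix {R : Type*} [CommRing R] (x : R) :
    (quotientMatrix x).det = 3 - 7 * x + 3 * x ^ 2 + x ^ 3 := by
  rw [quotientMatrix, det_fin_two_of]
  ring

lemma sum_pow_eq_of_map_val_eq {σ R : Type*} [CommSemiring R] {s : Finset σ} {e : σ → ℕ}
    {E : Multiset ℕ} (h : s.val.map e = E) (x : R) : ∑ u ∈ s, x ^ e u = (E.map (x ^ ·)).sum := by
  rw [← h, Multiset.map_map]
  rfl

variable {R : Type*} [CommSemiring R] (x : R)

lemma sum_columnType_transferMatrix (t : Fin 3 → Fin 2) (k : Fin 2) :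
    ∑ u with columnType u = k, transferMatrix (Fin 3) (Fin 2) x t u =
      quotientMatrix x (columnType t) k := by
  refine (sum_pow_eq_of_map_val_eq (map_card_newColors_columnType t k) x).trans ?_
  generalize columnType t = l
  fin_cases l <;> fin_cases k <;>
    simp only [quotientMatrix, Fin.zero_eta, Fin.mk_one, of_apply, cons_val', cons_val_zero,
      cons_val_one, cons_val_fin_one, Multiset.insert_eq_cons, Multiset.map_cons,
      Multiset.map_singleton, Multiset.sum_cons, Multiset.sum_singleton, pow_zero, pow_one] <;>
    ring

lemma sum_columnType_pow_card_image (k : Fin 2) :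
    ∑ u with columnType u = k, x ^ (Finset.univ.image u).card = ![2 * x, 6 * x ^ 2] k := by
  rw [sum_pow_eq_of_map_val_eq (map_card_image_columnType k)]
  fin_cases k <;>
    simp only [Fin.zero_eta, Fin.mk_one, cons_val_zero, cons_val_one, cons_val_fin_one,
      Multiset.insert_eq_cons, Multiset.map_cons, Multiset.map_singleton, Multiset.sum_cons,
      Multiset.sum_singleton, pow_one] <;>
    ring

theorem dotProduct_transferMatrix_pow_mulVec_one (m : ℕ) :
    (fun u : Fin 3 → Fin 2 ↦ x ^ (Finset.univ.image u).card) ⬝ᵥ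
        transferMatrix (Fin 3) (Fin 2) x ^ m *ᵥ 1 =
      ![2 * x, 6 * x ^ 2] ⬝ᵥ quotientMatrix x ^ m *ᵥ 1 := by
  have h := pow_mulVec_comp_of_sum_fiber_eq (sum_columnType_transferMatrix x) m 1
  rw [Pi.one_comp] at h
  rw [h, dotProduct_comp_eq_dotProduct_sum_fiber]
  simp only [sum_columnType_pow_card_image]

theorem tpoly_succ_eq_dotProduct (m : ℕ) :
    tpoly (m + 1) = ![2 * X, 6 * X ^ 2] ⬝ᵥ quotientMatrix X ^ m *ᵥ 1 := by
  rw [← dotProduct_transferMatrix_pow_mulVec_one, ← sum_pow_card_connectedComponent]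
  exact finsum_monomial_card_twoColoredPartition _

end ThreeRows

/-- `t₁(y) = 2y + 6y²`, `t₂(y) = 2y + 44y² + 12y³ + 6y⁴`, and for `n ≥ 3`,
`tₙ(y) = (4 + 3y + y²)·t_{n-1}(y) - (3 - 7y + 3y² + y³)·t_{n-2}(y)`. -/
theorem tpoly_recurrence :
    tpoly 1 = 2 * Polynomial.X + 6 * Polynomial.X ^ 2 ∧
    tpoly 2 = 2 * Polynomial.X + 44 * Polynomial.X ^ 2 + 12 * Polynomial.X ^ 3
        + 6 * Polynomial.X ^ 4 ∧
    ∀ n : ℕ, 3 ≤ n →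
      tpoly n = (4 + 3 * Polynomial.X + Polynomial.X ^ 2) * tpoly (n - 1)
        - (3 - 7 * Polynomial.X + 3 * Polynomial.X ^ 2 + Polynomial.X ^ 3) * tpoly (n - 2) := by
  refine ⟨?_, ?_, fun n hn ↦ ?_⟩
  · rw [tpoly_succ_eq_dotProduct 0]
    simp [dotProduct]
  · rw [tpoly_succ_eq_dotProduct 1]
    simp only [quotientMatrix, dotProduct, Matrix.mulVec, Fin.sum_univ_two, Matrix.of_apply,
      Matrix.cons_val', Matrix.cons_val_fin_one, Matrix.cons_val_zero, Matrix.cons_val_one,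
      Pi.one_apply, pow_one, mul_one]
    ring
  · obtain ⟨m, rfl⟩ := Nat.exists_eq_add_of_le' hn
    rw [← trace_quotientMatrix, ← det_quotientMatrix]
    simp only [Nat.reduceSubDiff, tpoly_succ_eq_dotProduct]
    exact dotProduct_pow_add_two_mulVec_fin_two _ _ _ m
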